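/- Let p be an odd prime, d ≥ 1 an integer, and α ∈ ℚ_p a nonzero p-adic number with v := ord_p(α). Set ν := ord_p(d) and ℓ := 1 + 2ν. Then the equation ζ^d = α has a solution ζ ∈ ℚ_p if and only if both of the following hold: (i) d divides v, and (ii) the multiplicative order of the image of the unit p^{−v}·α in (ℤ/p^ℓℤ)^× divides φ(p^ℓ)/gcd(d, φ(p^ℓ)), where φ(p^ℓ) = p^{ℓ−1}(p−1). -/

import Mathlib

theorem aux_cyclic {G : Type*} [CommGroup G] [IsCyclic G] [Finite G] (d : ℕ) (x : G) :
    (∃ y : G, y ^ d = x) ↔ orderOf x ∣ Nat.card G / Nat.gcd d (Nat.card G) := by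
  have hn : 0 < Nat.card G := Nat.card_pos
  rw [orderOf_dvd_iff_pow_eq_one]
  have hle : ∀ y : G, (y ^ d) ^ (Nat.card G / Nat.gcd d (Nat.card G)) = 1 := by
    intro y
    obtain ⟨e, he⟩ := Nat.gcd_dvd_left d (Nat.card G)
    have h2 := Nat.mul_div_cancel' (Nat.gcd_dvd_right d (Nat.card G))
    have : d * (Nat.card G / Nat.gcd d (Nat.card G)) = Nat.card G * e := by
      generalize Nat.card G / Nat.gcd d (Nat.card G) = m at *
      generalize Nat.gcd d (Nat.card G) = g at *
      rw [← h2, he]; ring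
    rw [← pow_mul, this, pow_mul, pow_card_eq_one', one_pow]
  constructor
  · rintro ⟨y, rfl⟩; exact hle y
  · intro hx
    have hHK : (powMonoidHom d : G →* G).range ≤
        (powMonoidHom (Nat.card G / Nat.gcd d (Nat.card G)) : G →* G).ker := by
      rintro _ ⟨y, rfl⟩
      exact hle y
    have hdvd : Nat.card G / Nat.gcd d (Nat.card G) ∣ Nat.card G :=
      Nat.div_dvd_of_dvd (Nat.gcd_dvd_right _ _)
    have heq := Subgroup.eq_of_le_of_card_ge hHK (by
      rw [IsCyclic.card_powMonoidHom_range, IsCyclic.card_powMonoidHom_ker,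
        Nat.gcd_eq_right hdvd, Nat.gcd_comm])
    have : x ∈ (powMonoidHom d : G →* G).range := by
      rw [heq]; exact hx
    exact this

theorem aux_hensel (p : ℕ) [Fact p.Prime] (d : ℕ) (hd : 1 ≤ d) (u : ℤ_[p]) (a : ℤ_[p])
    (ha : ‖a‖ = 1)
    (h : PadicInt.toZModPow (1 + 2 * padicValNat p d) (a ^ d) =
      PadicInt.toZModPow (1 + 2 * padicValNat p d) u) : ∃ z : ℤ_[p], z ^ d = u := by
  have hp : (1 : ℝ) < p := by exact_mod_cast (Fact.out : p.Prime).one_lt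
  have h1 : ‖a ^ d - u‖ ≤ (p : ℝ) ^ (-((1 + 2 * padicValNat p d : ℕ) : ℤ)) := by
    rw [PadicInt.norm_le_pow_iff_mem_span_pow, ← PadicInt.ker_toZModPow, RingHom.mem_ker,
      map_sub, h, sub_self]
  have h2 : ‖(d : ℤ_[p])‖ = (p : ℝ) ^ (-(padicValNat p d : ℤ)) := by
    rw [PadicInt.norm_def, PadicInt.coe_natCast,
      Padic.norm_eq_zpow_neg_valuation (by exact_mod_cast (by omega : d ≠ 0)),
      Padic.valuation_natCast]
  have key : ‖(Polynomial.X ^ d - Polynomial.C u : Polynomial ℤ_[p]).aeval a‖ <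
      ‖(Polynomial.X ^ d - Polynomial.C u : Polynomial ℤ_[p]).derivative.aeval a‖ ^ 2 := by
    simp only [map_sub, map_pow, Polynomial.aeval_X, Polynomial.aeval_C, Algebra.algebraMap_self,
      RingHom.id_apply, Polynomial.derivative_X_pow, Polynomial.derivative_C, sub_zero, map_mul,
      map_natCast, norm_mul, norm_pow, ha, one_pow, mul_one, h2]
    refine lt_of_le_of_lt h1 ?_
    rw [← zpow_natCast, ← zpow_mul]
    apply zpow_lt_zpow_right₀ hp
    push_cast; omega
  obtain ⟨z, hz, -⟩ := hensels_lemma key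
  refine ⟨z, ?_⟩
  simpa [sub_eq_zero] using hz

theorem aux_unit (p : ℕ) [Fact p.Prime] (hodd : Odd p) (d : ℕ) (hd : 1 ≤ d) (u : ℤ_[p])
    (hu : ‖u‖ = 1) :
    (∃ z : ℤ_[p], z ^ d = u) ↔ orderOf (PadicInt.toZModPow (1 + 2 * padicValNat p d) u) ∣
          p ^ (2 * padicValNat p d) * (p - 1) /
            Nat.gcd d (p ^ (2 * padicValNat p d) * (p - 1)) := by
  have hp : p.Prime := Fact.out
  have h2 : p ≠ 2 := by rintro rfl; exact absurd hodd (by decide)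
  set l := 1 + 2 * padicValNat p d with hl
  have : NeZero (p ^ l) := ⟨pow_ne_zero _ hp.ne_zero⟩
  have : IsCyclic (ZMod (p ^ l))ˣ := ZMod.isCyclic_units_of_prime_pow p hp h2 l
  have hcard : Nat.card (ZMod (p ^ l))ˣ = p ^ (2 * padicValNat p d) * (p - 1) := by
    rw [Nat.card_eq_fintype_card, ZMod.card_units_eq_totient, hl,
      Nat.totient_prime_pow hp (by omega)]
    congr 2; omega
  have huu : IsUnit u := PadicInt.isUnit_iff.2 hu
  obtain ⟨U, rfl⟩ := huu
  let f : ℤ_[p]ˣ →* (ZMod (p ^ l))ˣ := Units.map (PadicInt.toZModPow (p := p) l).toMonoidHom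
  have hf : ∀ x : ℤ_[p]ˣ, ((f x : (ZMod (p ^ l))ˣ) : ZMod (p ^ l)) = PadicInt.toZModPow l (x : ℤ_[p]) :=
    fun _ => rfl
  rw [← hf, orderOf_units, ← hcard, ← aux_cyclic]
  constructor
  · rintro ⟨z, hz⟩
    have hzu : IsUnit z := (isUnit_pow_iff (by omega : d ≠ 0)).1 (hz ▸ U.isUnit)
    obtain ⟨Z, rfl⟩ := hzu
    refine ⟨f Z, ?_⟩
    rw [← map_pow]
    congr 1
    ext
    simp [← hz]
  · rintro ⟨y, hy⟩
    obtain ⟨a, ha⟩ := ZMod.ringHom_surjective (PadicInt.toZModPow l) (y : ZMod (p ^ l))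
    have hya : PadicInt.toZModPow l (a ^ d) = PadicInt.toZModPow l (U : ℤ_[p]) := by
      rw [map_pow, ha, ← hf, ← hy, Units.val_pow_eq_pow_val]
    refine aux_hensel p d hd U a ?_ hya
    rw [← PadicInt.isUnit_iff]
    by_contra hna
    have hm : a ∈ IsLocalRing.maximalIdeal ℤ_[p] := hna
    rw [PadicInt.maximalIdeal_eq_span_p, Ideal.mem_span_singleton] at hm
    have h3 : a ^ d - U ∈ IsLocalRing.maximalIdeal ℤ_[p] := by
      rw [PadicInt.maximalIdeal_eq_span_p, Ideal.mem_span_singleton]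
      have : a ^ d - U ∈ RingHom.ker (PadicInt.toZModPow (p := p) l) := by
        rw [RingHom.mem_ker, map_sub, hya, sub_self]
      rw [PadicInt.ker_toZModPow, Ideal.mem_span_singleton] at this
      exact (dvd_pow_self _ (by omega)).trans this
    rw [PadicInt.maximalIdeal_eq_span_p, Ideal.mem_span_singleton] at h3
    have h4 : (p : ℤ_[p]) ∣ U := (dvd_sub_right (hm.trans (dvd_pow_self a (by omega)))).1 h3
    exact PadicInt.prime_p.not_unit (isUnit_of_dvd_unit h4 U.isUnit)

theorem stmt15 (p : ℕ) [Fact p.Prime] (hodd : Odd p) (d : ℕ) (hd : 1 ≤ d)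
    (α : ℚ_[p]) (hα : α ≠ 0) (u : ℤ_[p])
    (hu : (u : ℚ_[p]) = (p : ℚ_[p]) ^ (-α.valuation) * α) :
    (∃ ζ : ℚ_[p], ζ ^ d = α) ↔
      ((d : ℤ) ∣ α.valuation ∧
        orderOf (PadicInt.toZModPow (1 + 2 * padicValNat p d) u) ∣
          p ^ (2 * padicValNat p d) * (p - 1) /
            Nat.gcd d (p ^ (2 * padicValNat p d) * (p - 1))) := by
  have hp : p.Prime := Fact.out
  have hpq : (p : ℚ_[p]) ≠ 0 := by exact_mod_cast hp.ne_zero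
  have hpr : (p : ℝ) ≠ 0 := by exact_mod_cast hp.ne_zero
  have hnorm : ∀ x : ℚ_[p], x ≠ 0 → ‖(p : ℚ_[p]) ^ (-x.valuation) * x‖ = 1 := by
    intro x hx
    rw [norm_mul, Padic.norm_p_zpow, Padic.norm_eq_zpow_neg_valuation hx, ← zpow_add₀ hpr]
    simp
  have hu1 : ‖u‖ = 1 := by rw [PadicInt.norm_def, hu, hnorm α hα]
  rw [← aux_unit p hodd d hd u hu1]
  constructor
  · rintro ⟨ζ, rfl⟩
    have hζ : ζ ≠ 0 := by rintro rfl; exact hα (zero_pow (by omega))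
    obtain ⟨w, hw⟩ : ∃ w : ℤ_[p], (w : ℚ_[p]) = (p : ℚ_[p]) ^ (-ζ.valuation) * ζ :=
      ⟨⟨(p : ℚ_[p]) ^ (-ζ.valuation) * ζ, (hnorm ζ hζ).le⟩, rfl⟩
    refine ⟨by rw [Padic.valuation_pow]; exact dvd_mul_right _ _, w, ?_⟩
    apply PadicInt.ext
    rw [hu, PadicInt.coe_pow, hw, Padic.valuation_pow, mul_pow, ← zpow_natCast, ← zpow_mul]
    congr 2; ring
  · rintro ⟨⟨k, hk⟩, z, rfl⟩
    refine ⟨(p : ℚ_[p]) ^ k * z, ?_⟩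
    rw [mul_pow, ← PadicInt.coe_pow, hu, ← mul_assoc, ← zpow_natCast, ← zpow_mul, ← zpow_add₀ hpq,
      hk]
    rw [show k * (d : ℤ) + -(d * k) = 0 by ring, zpow_zero, one_mul]
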